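/- Let I, d, K, J be positive integers, let X ⊆ {0,1}^I × ℝ^d be nonempty, let g : {0,1}^I × ℝ^d → ℝ, let Q : {0,1}^I × {1,…,K} → ℝ, let λ ∈ [0,1], risk level α ∈ (0,1), and γ, η ∈ ℝ. Let ξ¹,…,ξ^K ∈ ℝ^J and μ : {0,1}^I → ℝ^J, S : {0,1}^I → ℝ^{J×J} with S(x) symmetric positive definite for all x; for x ∈ {0,1}^I set P₃(x) = {p ∈ ℝ^K : p ≥ 0, Σ_k p_k = 1, (Σ_k p_k ξᵏ − μ(x))ᵀ S(x)⁻¹ (Σ_k p_k ξᵏ − μ(x)) ≤ γ, η S(x) − Σ_k p_k (ξᵏ − μ(x))(ξᵏ − μ(x))ᵀ ⪰ 0} and Q(p) = {q ∈ ℝ^K : 0 ≤ q_k ≤ p_k λ/(1−α), Σ_k q_k = λ}. Assume the Slater condition: for every x in the projection X̂ there exists p ∈ ℝ^K with p ≥ 0, Σ_k p_k = 1, strict inequality in the ellipsoid constraint, and η S(x) − Σ_k p_k (ξᵏ − μ(x))(ξᵏ − μ(x))ᵀ positive definite. Then inf over (x,y) ∈ X of [ g(x,y) + sup { (1−λ)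 Σ_k p_k Q(x,k) + Σ_k q_k Q(x,k) : p ∈ P₃(x), q ∈ Q(p) } ] equals inf of g(x,y) − λ θ + s + S(x) • z₁ − 2 μ(x)ᵀ z₂ + γ z₃ + η (S(x) • Y) over all (x,y) ∈ X, θ, s ∈ ℝ, z₁ ∈ ℝ^{J×J}, z₂ ∈ ℝ^J, z₃ ∈ ℝ, Y ∈ ℝ^{J×J}, π ∈ ℝ^K with π ≥ 0, subject to: the block matrix Z = [[z₁, z₂],[z₂ᵀ, z₃]] is positive semidefinite, Y is positive semidefinite, s − 2 z₂ᵀ ξᵏ + ((ξᵏ − μ(x))(ξᵏ − μ(x))ᵀ) • Y − (λ/(1−α)) π_k ≥ (1−λ) Q(x,k) for all k, and π_k − θ ≥ Q(x,k) for all k. -/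

import Mathlib

open scoped BigOperators
open Matrix

/-- Frobenius inner product `A • B = trace(Aᵀ B) = Σᵢⱼ Aᵢⱼ Bᵢⱼ`. -/
def frob {n : Type*} [Fintype n] (A B : Matrix n n ℝ) : ℝ := ∑ i, ∑ j, A i j * B i j

/-- The block matrix `Z = [[z₁, z₂], [z₂ᵀ, z₃]]`. -/
def blockMat {J : ℕ} (z₁ : Matrix (Fin J) (Fin J) ℝ) (z₂ : Fin J → ℝ) (z₃ : ℝ) :
    Matrix (Fin J ⊕ Unit) (Fin J ⊕ Unit) ℝ :=
  Matrix.fromBlocks z₁ (Matrix.of fun i _ => z₂ i) (Matrix.of fun _ j => z₂ j)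
    (Matrix.of fun _ _ => z₃)

/-- Type 3 (general moment-based) ambiguity set with finite support. -/
def Type3Set (K J : ℕ) (ξ : Fin K → Fin J → ℝ) (μ : Fin J → ℝ)
    (S : Matrix (Fin J) (Fin J) ℝ) (γ η : ℝ) : Set (Fin K → ℝ) :=
  {p | (∀ k, 0 ≤ p k) ∧ (∑ k, p k) = 1 ∧
    (fun j => (∑ k, p k * ξ k j) - μ j) ⬝ᵥ (S⁻¹ *ᵥ fun j => (∑ k, p k * ξ k j) - μ j) ≤ γ ∧
    (η • S -
      ∑ k, p k • Matrix.vecMulVec (fun j => ξ k j - μ j) (fun j => ξ k j - μ j)).PosSemidef}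

/-- CVaR-multiplier set `Q(p) = {q : 0 ≤ q_k ≤ p_k λ/(1−α), Σ_k q_k = λ}`. -/
def CVaRSet (K : ℕ) (lam alp : ℝ) (p : Fin K → ℝ) : Set (Fin K → ℝ) :=
  {q | (∀ k, 0 ≤ q k ∧ q k ≤ p k * (lam / (1 - alp))) ∧ (∑ k, q k) = lam}

/-!
For a fixed decision, a distribution `p` and its CVaR multipliers `q` range over a compact convex
polytope once the normalisation `∑ q = λ` is moved to the constraints. A Schur complement makes the
ellipsoid constraint linear in `p`, so `∑ q = λ` and both matrix constraints become one conic
constraint on a linear image of the polytope. If `v` exceeds the worst-case risk, this compact image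
misses the cone of points with excess at least `0` over `v`, and a separating functional, tested at
the vertices of the polytope, is a dual solution of value `v`. Feasibility makes its coefficient on
the objective nonzero; as the polytope is compact, no interior point is needed for the dual infimum
to equal the primal supremum.
-/

lemma sInf_eq_sInf_of_lowerBounds_eq {s t : Set ℝ} (h : lowerBounds s = lowerBounds t) :
    sInf s = sInf t := by
  have sInf_eq_zero {u : Set ℝ} (hu : ¬∃ a, IsGLB u a) : sInf u = 0 := by
    rcases u.eq_empty_or_nonempty with rfl | hne
    · exact Real.sInf_empty
    · exact Real.sInf_of_not_bddBelow fun hb => hu ⟨_, Real.isGLB_sInf hne hb⟩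
  by_cases hs : ∃ a, IsGLB s a
  · obtain ⟨a, ha⟩ := hs
    have hta : IsGLB t a := (isGLB_congr h).1 ha
    rw [ha.csInf_eq ha.nonempty, hta.csInf_eq hta.nonempty]
  · rw [sInf_eq_zero hs, sInf_eq_zero (by simpa only [isGLB_congr h] using hs)]

lemma sInf_add_eq_of_isGLB {D : Type*} {X : Set D} (g : D → ℝ) {m : D → ℝ} {W : D → Set ℝ}
    (hW : ∀ z ∈ X, IsGLB (W z) (m z)) :
    sInf {v | ∃ z ∈ X, v = g z + m z} = sInf {v | ∃ z ∈ X, ∃ w ∈ W z, v = g z + w} := by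
  refine sInf_eq_sInf_of_lowerBounds_eq (Set.Subset.antisymm ?_ ?_)
  · rintro x hx _ ⟨z, hz, w, hw, rfl⟩
    exact (hx ⟨z, hz, rfl⟩).trans (add_le_add_right ((hW z hz).1 hw) _)
  · rintro x hx _ ⟨z, hz, rfl⟩
    have hle : x - g z ≤ m z :=
      (hW z hz).2 fun w hw => sub_le_iff_le_add'.2 (hx ⟨z, hz, w, hw, rfl⟩)
    linarith

section ConicSeparation

variable {E F : Type*} [AddCommGroup E] [Module ℝ E] [TopologicalSpace E]
  [AddCommGroup F] [Module ℝ F] [TopologicalSpace F]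

/-- The product of two proper cones; it combines several conic constraints into one. -/
def coneProd (C₁ : ProperCone ℝ E) (C₂ : ProperCone ℝ F) : ProperCone ℝ (E × F) :=
  C₁.comap (.fst ℝ E F) ⊓ C₂.comap (.snd ℝ E F)

lemma mem_coneProd {C₁ : ProperCone ℝ E} {C₂ : ProperCone ℝ F} {x : E × F} :
    x ∈ coneProd C₁ C₂ ↔ x.1 ∈ C₁ ∧ x.2 ∈ C₂ :=
  Iff.rfl

lemma strongDual_prod_apply (f : StrongDual ℝ (ℝ × F)) (s : ℝ) (u : F) :
    f (s, u) = s * f (1, 0) + f (0, u) := by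
  rw [← smul_eq_mul, ← map_smul, ← map_add]
  simp only [Prod.smul_mk, Prod.mk_add_mk, smul_eq_mul, mul_one, smul_zero, add_zero, zero_add]

theorem exists_nonneg_dual_lt_of_isCompact [IsTopologicalAddGroup F] [ContinuousSMul ℝ F]
    [LocallyConvexSpace ℝ F] (C : ProperCone ℝ F) {D : Set (ℝ × F)} (hconv : Convex ℝ D)
    (hcomp : IsCompact D) (hneg : ∀ x ∈ D, x.2 ∈ C → x.1 < 0) (hfeas : ∃ x ∈ D, x.2 ∈ C) :
    ∃ ℓ : StrongDual ℝ F, (∀ u ∈ C, 0 ≤ ℓ u) ∧ ∀ x ∈ D, x.1 + ℓ x.2 < 0 := by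
  have hdisj : Disjoint D (coneProd (.positive ℝ ℝ) C : ProperCone ℝ (ℝ × F)) :=
    Set.disjoint_left.2 fun x hxD hxC => (hneg x hxD hxC.2).not_ge hxC.1
  obtain ⟨f, hfC, hfD⟩ := ProperCone.hyperplane_separation _ hconv hcomp hdisj
  have hτ : 0 < f (1, 0) := by
    obtain ⟨⟨r, u⟩, hD, hu⟩ := hfeas
    have hfr : r * f (1, 0) + f (0, u) < 0 := strongDual_prod_apply f r u ▸ hfD _ hD
    have hfu : 0 ≤ f (0, u) := hfC (0, u) (mem_coneProd.2 ⟨zero_mem _, hu⟩)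
    exact pos_of_mul_neg_right (by linarith) (hneg _ hD hu).le
  refine ⟨(f (1, 0))⁻¹ • f.comp (.inr ℝ ℝ F), fun u hu => ?_, fun ⟨r, u⟩ hD => ?_⟩
  · exact mul_nonneg (inv_nonneg.2 hτ.le) (hfC (0, u) (mem_coneProd.2 ⟨zero_mem _, hu⟩))
  · calc r + (f (1, 0))⁻¹ * f (0, u) = (f (1, 0))⁻¹ * f (r, u) := by
          rw [strongDual_prod_apply f r u, mul_add, mul_left_comm, inv_mul_cancel₀ hτ.ne', mul_one]
      _ < 0 := mul_neg_of_pos_of_neg (inv_pos.2 hτ) (hfD _ hD)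

end ConicSeparation

section ConicMeanCVaR

variable {K : ℕ} {lam alp : ℝ}

/-- The values over `p ∈ P` and `q ∈ Q(p)` of the dual representation of
`(1 - λ) 𝔼 + λ CVaR_α`; their supremum is the worst-case risk of `Q` over `P`. -/
def meanCVaRValues (P : Set (Fin K → ℝ)) (lam alp : ℝ) (Q : Fin K → ℝ) : Set ℝ :=
  {r | ∃ p ∈ P, ∃ q ∈ CVaRSet K lam alp p,
    r = (1 - lam) * (∑ k, p k * Q k) + ∑ k, q k * Q k}

lemma smul_mem_CVaRSet (hlam0 : 0 ≤ lam) (halp0 : 0 ≤ alp) (halp1 : alp < 1) {p : Fin K → ℝ}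
    (hp : p ∈ stdSimplex ℝ (Fin K)) : lam • p ∈ CVaRSet K lam alp p := by
  have hle : lam ≤ lam / (1 - alp) := le_div_self hlam0 (by linarith) (by linarith)
  refine ⟨fun k => ⟨mul_nonneg hlam0 (hp.1 k), ?_⟩, ?_⟩
  · simpa only [Pi.smul_apply, smul_eq_mul, mul_comm] using
      mul_le_mul_of_nonneg_left hle (hp.1 k)
  · simp only [Pi.smul_apply, smul_eq_mul, ← Finset.mul_sum, hp.2, mul_one]

/-- Pairs of a probability vector `p` and a vector `q` with `0 ≤ q ≤ c p`, i.e. CVaR multipliers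
without the normalisation `∑ q = λ`, which is dualised instead. -/
def relaxedCVaRPairs (K : ℕ) (c : ℝ) : Set ((Fin K → ℝ) × (Fin K → ℝ)) :=
  {x | x.1 ∈ stdSimplex ℝ (Fin K) ∧ ∀ k, 0 ≤ x.2 k ∧ x.2 k ≤ x.1 k * c}

lemma convex_relaxedCVaRPairs (c : ℝ) : Convex ℝ (relaxedCVaRPairs K c) := by
  rintro ⟨p, q⟩ ⟨hp, hq⟩ ⟨p', q'⟩ ⟨hp', hq'⟩ s t hs ht hst
  refine ⟨convex_stdSimplex ℝ _ hp hp' hs ht hst, fun k => ⟨?_, ?_⟩⟩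
  · exact add_nonneg (mul_nonneg hs (hq k).1) (mul_nonneg ht (hq' k).1)
  · calc s * q k + t * q' k ≤ s * (p k * c) + t * (p' k * c) :=
          add_le_add (mul_le_mul_of_nonneg_left (hq k).2 hs)
            (mul_le_mul_of_nonneg_left (hq' k).2 ht)
      _ = (s * p k + t * p' k) * c := by ring

lemma isCompact_relaxedCVaRPairs (c : ℝ) : IsCompact (relaxedCVaRPairs K c) := by
  have hbox : IsCompact (stdSimplex ℝ (Fin K) ×ˢ Set.Icc (0 : Fin K → ℝ) fun _ => |c|) :=
    (isCompact_stdSimplex ℝ _).prod isCompact_Icc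
  refine hbox.of_isClosed_subset ?_ fun x hx => ⟨hx.1, fun k => (hx.2 k).1, fun k => ?_⟩
  · simp only [relaxedCVaRPairs, Set.ofPred_and, Set.ofPred_forall]
    refine ((isClosed_stdSimplex ℝ (Fin K)).preimage continuous_fst).inter
      (isClosed_iInter fun k => ?_)
    exact (isClosed_le (by fun_prop) (by fun_prop)).inter
      (isClosed_le (by fun_prop) (by fun_prop))
  · calc x.2 k ≤ x.1 k * c := (hx.2 k).2
      _ ≤ x.1 k * |c| := mul_le_mul_of_nonneg_left (le_abs_self c) (hx.1.1 k)
      _ ≤ |c| := mul_le_of_le_one_left (abs_nonneg c) (mem_Icc_of_mem_stdSimplex hx.1 k).2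

lemma single_mem_relaxedCVaRPairs {c t : ℝ} (ht0 : 0 ≤ t) (htc : t ≤ c) (k : Fin K) :
    (Pi.single k 1, Pi.single k t) ∈ relaxedCVaRPairs K c := by
  refine ⟨single_mem_stdSimplex ℝ k, fun i => ?_⟩
  rcases eq_or_ne i k with rfl | hik
  · simpa using ⟨ht0, htc⟩
  · simp [hik]

variable {F : Type*} [AddCommGroup F] [Module ℝ F]

/-- The linear map sending `(p, q)` to the excess of the mean-CVaR objective over `v`, the
normalisation defect `∑ q - λ` and the moment `∑ k, p k • A k`; the constants `v` and `λ` are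
multiplied by `∑ p`, which is `1` on probability vectors. -/
def excessMap (A : Fin K → F) (lam : ℝ) (Q : Fin K → ℝ) (v : ℝ) :
    (Fin K → ℝ) × (Fin K → ℝ) →ₗ[ℝ] ℝ × (ℝ × F) :=
  (Fintype.linearCombination ℝ fun k => ((1 - lam) * Q k - v, -lam, A k)).coprod
    (Fintype.linearCombination ℝ fun k => (Q k, 1, 0))

lemma excessMap_apply {A : Fin K → F} {Q : Fin K → ℝ} {v : ℝ} {p q : Fin K → ℝ}
    (hp : ∑ k, p k = 1) :
    excessMap A lam Q v (p, q) = ((1 - lam) * (∑ k, p k * Q k) + ∑ k, q k * Q k - v,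
      ∑ k, q k - lam, ∑ k, p k • A k) := by
  simp only [excessMap, LinearMap.coprod_apply, Fintype.linearCombination_apply, Prod.smul_mk,
    Prod.ext_iff, Prod.fst_add, Prod.snd_add, Prod.fst_sum, Prod.snd_sum, smul_eq_mul, mul_sub,
    Finset.sum_sub_distrib, ← Finset.sum_mul, hp, mul_left_comm _ (1 - lam), ← Finset.mul_sum]
  exact ⟨by ring, by ring, by simp⟩

lemma excessMap_single {A : Fin K → F} {Q : Fin K → ℝ} {v : ℝ} (k : Fin K) (t : ℝ) :
    excessMap A lam Q v (Pi.single k 1, Pi.single k t) =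
      ((1 - lam) * Q k + t * Q k - v, t - lam, A k) := by
  rw [excessMap_apply (single_mem_stdSimplex ℝ k).2]
  simp [Pi.single_apply]

variable [TopologicalSpace F]

/-- The probability vectors `p` on `K` scenarios whose moment `∑ k, p k • A k` satisfies a conic
constraint. -/
def conicAmbiguitySet (C : ProperCone ℝ F) (A : Fin K → F) : Set (Fin K → ℝ) :=
  {p | p ∈ stdSimplex ℝ (Fin K) ∧ ∑ k, p k • A k ∈ C}

/-- The values of the conic dual of the worst-case mean-CVaR problem over `conicAmbiguitySet C A`,
with the multipliers `π` of the bounds `q ≤ p λ/(1-α)` eliminated: the least admissible one is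
`π k = max 0 (Q k + θ)`. -/
def conicDualValues (C : ProperCone ℝ F) (A : Fin K → F) (lam alp : ℝ) (Q : Fin K → ℝ) : Set ℝ :=
  {v | ∃ θ : ℝ, ∃ ℓ : StrongDual ℝ F, (∀ u ∈ C, 0 ≤ ℓ u) ∧
    ∀ k, (1 - lam) * Q k + lam / (1 - alp) * max 0 (Q k + θ) + ℓ (A k) ≤ v + lam * θ}

variable (C : ProperCone ℝ F) (A : Fin K → F) (Q : Fin K → ℝ)

lemma conicDualValues_nonempty : (conicDualValues C A lam alp Q).Nonempty := by
  obtain ⟨v, hv⟩ := (Set.finite_range fun k =>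
    (1 - lam) * Q k + lam / (1 - alp) * max 0 (Q k + 0)).bddAbove
  exact ⟨v, 0, 0, fun _ _ => le_rfl, fun k => by simpa using hv ⟨k, rfl⟩⟩

variable {C A Q}

theorem le_of_mem_conicDualValues {r v : ℝ}
    (hr : r ∈ meanCVaRValues (conicAmbiguitySet C A) lam alp Q)
    (hv : v ∈ conicDualValues C A lam alp Q) : r ≤ v := by
  obtain ⟨p, ⟨hp, hpC⟩, q, ⟨hq, hq_sum⟩, rfl⟩ := hr
  obtain ⟨θ, ℓ, hℓ, hdual⟩ := hv
  have hpointwise (k : Fin K) :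
      (1 - lam) * (p k * Q k) + q k * Q k + p k * ℓ (A k) ≤ p k * (v + lam * θ) - q k * θ := by
    have hdual_k := mul_le_mul_of_nonneg_left (hdual k) (hp.1 k)
    have hq_max : q k * (Q k + θ) ≤ p k * (lam / (1 - alp)) * max 0 (Q k + θ) :=
      (mul_le_mul_of_nonneg_left (le_max_right _ _) (hq k).1).trans
        (mul_le_mul_of_nonneg_right (hq k).2 (le_max_left _ _))
    linarith
  have hsum := Finset.sum_le_sum fun k (_ : k ∈ Finset.univ) => hpointwise k
  have hmoment : 0 ≤ ∑ k, p k * ℓ (A k) := by simpa using hℓ _ hpC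
  simp only [Finset.sum_add_distrib, Finset.sum_sub_distrib, ← Finset.mul_sum, ← Finset.sum_mul,
    hp.2, hq_sum] at hsum
  linarith

theorem mem_conicDualValues_of_forall_lt [IsTopologicalAddGroup F] [ContinuousSMul ℝ F]
    [LocallyConvexSpace ℝ F] (hlam0 : 0 ≤ lam) (halp0 : 0 ≤ alp) (halp1 : alp < 1)
    (hfeas : (conicAmbiguitySet C A).Nonempty) {v : ℝ}
    (hv : ∀ r ∈ meanCVaRValues (conicAmbiguitySet C A) lam alp Q, r < v) :
    v ∈ conicDualValues C A lam alp Q := by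
  set c := lam / (1 - alp)
  have hc : 0 ≤ c := div_nonneg hlam0 (by linarith)
  obtain ⟨f, hf, hfneg⟩ := exists_nonneg_dual_lt_of_isCompact (coneProd ⊥ C)
    (D := excessMap A lam Q v '' relaxedCVaRPairs K c)
    ((convex_relaxedCVaRPairs c).linear_image _)
    ((isCompact_relaxedCVaRPairs c).image (LinearMap.continuous_of_finiteDimensional _))
    (by
      rintro _ ⟨⟨p, q⟩, ⟨hp, hq⟩, rfl⟩ hcone
      rw [excessMap_apply hp.2] at hcone ⊢
      have hq_sum : ∑ k, q k = lam := sub_eq_zero.1 hcone.1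
      exact sub_neg.2 (hv _ ⟨p, ⟨hp, hcone.2⟩, q, ⟨hq, hq_sum⟩, rfl⟩))
    (by
      obtain ⟨p, hp, hpC⟩ := hfeas
      obtain ⟨hq, hq_sum⟩ := smul_mem_CVaRSet hlam0 halp0 halp1 hp
      refine ⟨_, ⟨(p, lam • p), ⟨hp, hq⟩, rfl⟩, ?_⟩
      rw [excessMap_apply hp.2]
      exact mem_coneProd.2 ⟨sub_eq_zero.2 hq_sum, hpC⟩)
  refine ⟨f (1, 0), f.comp (.inr ℝ ℝ F),
    fun u hu => hf (0, u) (mem_coneProd.2 ⟨rfl, hu⟩), fun k => ?_⟩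
  have hvertex {t : ℝ} (ht0 : 0 ≤ t) (htc : t ≤ c) :
      (1 - lam) * Q k + t * (Q k + f (1, 0)) + f (0, A k) ≤ v + lam * f (1, 0) := by
    have hneg := hfneg _ ⟨_, single_mem_relaxedCVaRPairs ht0 htc k, rfl⟩
    simp only [excessMap_single, strongDual_prod_apply f (t - lam)] at hneg
    linarith
  rcases max_choice 0 (Q k + f (1, 0)) with hmax | hmax <;> rw [hmax]
  · simpa only [zero_mul, mul_zero, ContinuousLinearMap.comp_apply,
      ContinuousLinearMap.inr_apply] using hvertex le_rfl hc
  · exact hvertex hc le_rfl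

theorem isGLB_conicDualValues [IsTopologicalAddGroup F] [ContinuousSMul ℝ F]
    [LocallyConvexSpace ℝ F] (hlam0 : 0 ≤ lam) (halp0 : 0 ≤ alp) (halp1 : alp < 1)
    (hfeas : (conicAmbiguitySet C A).Nonempty) :
    IsGLB (conicDualValues C A lam alp Q)
      (sSup (meanCVaRValues (conicAmbiguitySet C A) lam alp Q)) := by
  obtain ⟨p, hp⟩ := hfeas
  obtain ⟨w, hw⟩ := conicDualValues_nonempty (lam := lam) (alp := alp) C A Q
  have hne : (meanCVaRValues (conicAmbiguitySet C A) lam alp Q).Nonempty :=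
    ⟨_, p, hp, _, smul_mem_CVaRSet hlam0 halp0 halp1 hp.1, rfl⟩
  have hbdd : BddAbove (meanCVaRValues (conicAmbiguitySet C A) lam alp Q) :=
    ⟨w, fun _ hr => le_of_mem_conicDualValues hr hw⟩
  refine ⟨fun v hv => csSup_le hne fun r hr => le_of_mem_conicDualValues hr hv, fun b hb => ?_⟩
  exact le_of_forall_gt_imp_ge_of_dense fun v hv => hb <|
    mem_conicDualValues_of_forall_lt hlam0 halp0 halp1 ⟨p, hp⟩ fun r hr =>
      (le_csSup hbdd hr).trans_lt hv

end ConicMeanCVaR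

section PosSemidefCone

variable {n : Type*} [Fintype n]

lemma frob_nonneg {A B : Matrix n n ℝ} (hA : A.PosSemidef) (hB : B.PosSemidef) :
    0 ≤ frob A B := by
  have hsum := (hA.hadamard hB).dotProduct_mulVec_nonneg fun _ => 1
  simpa [frob, dotProduct, mulVec] using hsum

lemma frob_vecMulVec (x : n → ℝ) (Z : Matrix n n ℝ) :
    frob (vecMulVec x x) Z = x ⬝ᵥ (Z *ᵥ x) := by
  simp only [frob, vecMulVec_apply, dotProduct, mulVec, Finset.mul_sum]
  exact Finset.sum_congr rfl fun i _ => Finset.sum_congr rfl fun j _ => by ring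

/-- The functional `M ↦ M • Z` on matrices, used as a conic multiplier. -/
def frobDual (Z : Matrix n n ℝ) : StrongDual ℝ (Matrix n n ℝ) where
  toFun M := frob M Z
  map_add' M N := by
    simp only [frob, Matrix.add_apply, add_mul, Finset.sum_add_distrib]
  map_smul' c M := by
    simp only [frob, Matrix.smul_apply, smul_eq_mul, mul_assoc, ← Finset.mul_sum, RingHom.id_apply]
  cont := by unfold frob; fun_prop

lemma frobDual_apply (Z M : Matrix n n ℝ) : frobDual Z M = frob M Z :=
  rfl

lemma frob_transpose (A B : Matrix n n ℝ) : frob Aᵀ Bᵀ = frob A B :=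
  Finset.sum_comm

lemma frob_add_right (A B C : Matrix n n ℝ) : frob A (B + C) = frob A B + frob A C := by
  simp only [frob, Matrix.add_apply, mul_add, Finset.sum_add_distrib]

lemma frob_smul_right (c : ℝ) (A B : Matrix n n ℝ) : frob A (c • B) = c * frob A B := by
  simp only [frob, Matrix.smul_apply, smul_eq_mul, mul_left_comm _ c, ← Finset.mul_sum]

lemma exists_forall_eq_frob (f : Matrix n n ℝ →ₗ[ℝ] ℝ) :
    ∃ R : Matrix n n ℝ, ∀ M, f M = frob M R := by
  classical
  refine ⟨.of fun i j => f (single i j 1), fun M => ?_⟩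
  calc f M = ∑ i, ∑ j, f (M i j • single i j 1) := by
        simp only [smul_single, smul_eq_mul, mul_one, ← map_sum, ← matrix_eq_sum_single]
    _ = frob M (.of fun i j => f (single i j 1)) := by
        simp only [map_smul, smul_eq_mul, frob, of_apply]

variable (n) in
/-- The cone of positive semidefinite matrices, closed in the entrywise topology. -/
def posSemidefCone : ProperCone ℝ (Matrix n n ℝ) where
  carrier := {M | M.PosSemidef}
  add_mem' := PosSemidef.add
  zero_mem' := .zero
  smul_mem' c _ hM := hM.smul c.2
  isClosed' := by
    simp only [posSemidef_iff_dotProduct_mulVec, Set.ofPred_and, Set.ofPred_forall]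
    refine (isClosed_eq (by fun_prop) (by fun_prop)).inter (isClosed_iInter fun x => ?_)
    exact isClosed_le (by fun_prop) (by fun_prop)

lemma mem_posSemidefCone {M : Matrix n n ℝ} : M ∈ posSemidefCone n ↔ M.PosSemidef :=
  Iff.rfl

lemma exists_posSemidef_forall_isHermitian_eq_frob {f : Matrix n n ℝ →ₗ[ℝ] ℝ}
    (hf : ∀ M ∈ posSemidefCone n, 0 ≤ f M) :
    ∃ Z : Matrix n n ℝ, Z.PosSemidef ∧ ∀ M : Matrix n n ℝ, M.IsHermitian → f M = frob M Z := by
  obtain ⟨R, hR⟩ := exists_forall_eq_frob f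
  have hsymm {M : Matrix n n ℝ} (hM : M.IsHermitian) :
      f M = frob M ((1 / 2 : ℝ) • (R + Rᵀ)) := by
    have hMt : frob M Rᵀ = frob M R := by
      simpa only [(conjTranspose_eq_transpose_of_trivial M).symm.trans hM] using
        frob_transpose M R
    rw [frob_smul_right, frob_add_right, hMt, hR]
    ring
  refine ⟨(1 / 2 : ℝ) • (R + Rᵀ), .of_dotProduct_mulVec_nonneg ?_ fun x => ?_, fun M => hsymm⟩
  · exact (isHermitian_add_transpose_self R).smul (.all _)
  · have hx : (vecMulVec x x).PosSemidef := by simpa using posSemidef_vecMulVec_self_star x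
    rw [star_trivial, ← frob_vecMulVec, ← hsymm hx.isHermitian]
    exact hf _ (mem_posSemidefCone.2 hx)

theorem exists_posSemidef_forall_isHermitian_eq_frob_add_frob {m : Type*} [Fintype m]
    {ℓ : Matrix m m ℝ × Matrix n n ℝ →ₗ[ℝ] ℝ}
    (hℓ : ∀ u ∈ coneProd (posSemidefCone m) (posSemidefCone n), 0 ≤ ℓ u) :
    ∃ (Z : Matrix m m ℝ) (Y : Matrix n n ℝ), Z.PosSemidef ∧ Y.PosSemidef ∧
      ∀ u, u.1.IsHermitian → u.2.IsHermitian → ℓ u = frob u.1 Z + frob u.2 Y := by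
  obtain ⟨Z, hZ, hℓZ⟩ := exists_posSemidef_forall_isHermitian_eq_frob (f := ℓ ∘ₗ .inl ℝ _ _)
    fun M hM => hℓ (M, 0) (mem_coneProd.2 ⟨hM, zero_mem _⟩)
  obtain ⟨Y, hY, hℓY⟩ := exists_posSemidef_forall_isHermitian_eq_frob (f := ℓ ∘ₗ .inr ℝ _ _)
    fun N hN => hℓ (0, N) (mem_coneProd.2 ⟨zero_mem _, hN⟩)
  refine ⟨Z, Y, hZ, hY, fun u hu₁ hu₂ => ?_⟩
  rw [← hℓZ _ hu₁, ← hℓY _ hu₂, LinearMap.comp_apply, LinearMap.comp_apply, ← map_add]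
  simp only [LinearMap.inl_apply, LinearMap.inr_apply, Prod.mk_add_mk, add_zero, zero_add]

instance matrixLocallyConvexSpace {m n : Type*} : LocallyConvexSpace ℝ (Matrix m n ℝ) :=
  inferInstanceAs (LocallyConvexSpace ℝ (m → n → ℝ))

end PosSemidefCone

section BlockMatrix

variable {J : ℕ} {S : Matrix (Fin J) (Fin J) ℝ}

lemma blockMat_eq_fromBlocks_replicateCol (S : Matrix (Fin J) (Fin J) ℝ) (v : Fin J → ℝ) (c : ℝ) :
    blockMat S v c = fromBlocks S (replicateCol Unit v) (replicateCol Unit v)ᴴ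
      (diagonal fun _ => c) := by
  ext (i | i) (j | j) <;> simp [blockMat]

lemma posSemidef_blockMat_iff (hS : S.PosDef) (v : Fin J → ℝ) (c : ℝ) :
    (blockMat S v c).PosSemidef ↔ v ⬝ᵥ (S⁻¹ *ᵥ v) ≤ c := by
  have := hS.isUnit.invertible
  have hschur : (diagonal fun _ => c) - (replicateCol Unit v)ᴴ * S⁻¹ * replicateCol Unit v =
      diagonal fun _ : Unit => c - v ⬝ᵥ (S⁻¹ *ᵥ v) := by
    ext i j
    rw [Matrix.mul_assoc]
    simp [Matrix.mul_apply, dotProduct, mulVec]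
  rw [blockMat_eq_fromBlocks_replicateCol, hS.fromBlocks₁₁, hschur, posSemidef_diagonal_iff]
  simp only [sub_nonneg, forall_const]

lemma isHermitian_blockMat (hS : S.IsHermitian) (v : Fin J → ℝ) (c : ℝ) :
    (blockMat S v c).IsHermitian :=
  hS.fromBlocks rfl rfl

lemma exists_eq_blockMat {Z : Matrix (Fin J ⊕ Unit) (Fin J ⊕ Unit) ℝ} (hZ : Z.IsHermitian) :
    ∃ z₁ z₂ z₃, Z = blockMat z₁ z₂ z₃ := by
  refine ⟨Z.toBlocks₁₁, fun j => Z (.inl j) (.inr ()), Z (.inr ()) (.inr ()), ?_⟩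
  ext (i | i) (j | j)
  · rfl
  · rfl
  · exact (hZ.apply (.inr i) (.inl j)).symm
  · rfl

lemma frob_blockMat (S z₁ : Matrix (Fin J) (Fin J) ℝ) (v z₂ : Fin J → ℝ) (c z₃ : ℝ) :
    frob (blockMat S v c) (blockMat z₁ z₂ z₃) = frob S z₁ + 2 * (v ⬝ᵥ z₂) + c * z₃ := by
  simp only [frob, blockMat, Fintype.sum_sum_type, fromBlocks_apply₁₁, fromBlocks_apply₁₂,
    fromBlocks_apply₂₁, fromBlocks_apply₂₂, of_apply, Finset.sum_add_distrib, Finset.univ_unique,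
    Finset.sum_singleton, dotProduct]
  ring

end BlockMatrix

section MomentSet

variable {K J : ℕ} (ξ : Fin K → Fin J → ℝ) (μ : Fin J → ℝ) (S : Matrix (Fin J) (Fin J) ℝ) (γ η : ℝ)

/-- The data of scenario `k` in the two matrix constraints of `Type3Set`: the ellipsoid constraint,
made linear in the distribution by a Schur complement, and the second-moment constraint. -/
def scenarioMoment (k : Fin K) :
    Matrix (Fin J ⊕ Unit) (Fin J ⊕ Unit) ℝ × Matrix (Fin J) (Fin J) ℝ :=
  (blockMat S (fun j => ξ k j - μ j) γ,
    η • S - vecMulVec (fun j => ξ k j - μ j) (fun j => ξ k j - μ j))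

lemma sum_smul_scenarioMoment {p : Fin K → ℝ} (hp : ∑ k, p k = 1) :
    ∑ k, p k • scenarioMoment ξ μ S γ η k =
      (blockMat S (fun j => (∑ k, p k * ξ k j) - μ j) γ,
        η • S - ∑ k, p k • vecMulVec (fun j => ξ k j - μ j) (fun j => ξ k j - μ j)) := by
  refine Prod.ext ?_ ?_
  · ext (i | i) (j | j) <;>
      simp [scenarioMoment, blockMat, Prod.fst_sum, Matrix.sum_apply, mul_sub, ← Finset.sum_mul, hp]
  · simp only [scenarioMoment, Prod.snd_sum, Prod.smul_snd, smul_sub, Finset.sum_sub_distrib,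
      ← Finset.sum_smul, hp, one_smul]

theorem type3Set_eq_conicAmbiguitySet (hS : S.PosDef) :
    Type3Set K J ξ μ S γ η =
      conicAmbiguitySet (coneProd (posSemidefCone _) (posSemidefCone _))
        (scenarioMoment ξ μ S γ η) := by
  ext p
  refine and_assoc.symm.trans (and_congr_right fun hp => ?_)
  rw [sum_smul_scenarioMoment ξ μ S γ η hp.2]
  exact and_congr_left' (posSemidef_blockMat_iff hS _ γ).symm

lemma isHermitian_scenarioMoment (hS : S.IsHermitian) (k : Fin K) :
    (scenarioMoment ξ μ S γ η k).1.IsHermitian ∧ (scenarioMoment ξ μ S γ η k).2.IsHermitian :=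
  ⟨isHermitian_blockMat hS _ γ, (hS.smul (.all η)).sub (transpose_vecMulVec _ _)⟩

lemma frob_scenarioMoment (k : Fin K) (z₁ Y : Matrix (Fin J) (Fin J) ℝ) (z₂ : Fin J → ℝ) (z₃ : ℝ) :
    frob (scenarioMoment ξ μ S γ η k).1 (blockMat z₁ z₂ z₃) +
        frob (scenarioMoment ξ μ S γ η k).2 Y =
      frob S z₁ + 2 * (∑ j, z₂ j * ξ k j) - 2 * (∑ j, μ j * z₂ j) + γ * z₃ + η * frob S Y -
        frob (vecMulVec (fun j => ξ k j - μ j) (fun j => ξ k j - μ j)) Y := by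
  have hsnd : frob (scenarioMoment ξ μ S γ η k).2 Y = η * frob S Y -
      frob (vecMulVec (fun j => ξ k j - μ j) (fun j => ξ k j - μ j)) Y := by
    simp only [scenarioMoment, ← frobDual_apply, map_sub, map_smul, smul_eq_mul]
  rw [hsnd, scenarioMoment, frob_blockMat]
  simp only [dotProduct, sub_mul, Finset.sum_sub_distrib, mul_comm (ξ k _)]
  ring

/-- The objective values of the semidefinite program dual to the worst-case mean-CVaR of `Q` over
`Type3Set`, in the paper's variables. -/
def sdpValues (lam alp : ℝ) (Q : Fin K → ℝ) : Set ℝ :=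
  {v | ∃ θ s z₃ : ℝ, ∃ z₁ Y : Matrix (Fin J) (Fin J) ℝ, ∃ z₂ : Fin J → ℝ, ∃ pv : Fin K → ℝ,
    (∀ k, 0 ≤ pv k) ∧ (blockMat z₁ z₂ z₃).PosSemidef ∧ Y.PosSemidef ∧
    (∀ k, (1 - lam) * Q k ≤ s - 2 * (∑ j, z₂ j * ξ k j) +
      frob (vecMulVec (fun j => ξ k j - μ j) (fun j => ξ k j - μ j)) Y - lam / (1 - alp) * pv k) ∧
    (∀ k, Q k ≤ pv k - θ) ∧
    v = -(lam * θ) + s + frob S z₁ - 2 * (∑ j, μ j * z₂ j) + γ * z₃ + η * frob S Y}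

theorem sdpValues_eq_conicDualValues (hS : S.IsHermitian) {lam alp : ℝ}
    (hc : 0 ≤ lam / (1 - alp)) (Q : Fin K → ℝ) :
    sdpValues ξ μ S γ η lam alp Q =
      conicDualValues (coneProd (posSemidefCone _) (posSemidefCone _))
        (scenarioMoment ξ μ S γ η) lam alp Q := by
  ext v
  constructor
  · rintro ⟨θ, s, z₃, z₁, Y, z₂, pv, hpv, hZ, hY, hobj, hQ, rfl⟩
    refine ⟨θ, (frobDual (blockMat z₁ z₂ z₃)).coprod (frobDual Y), fun u hu =>
      add_nonneg (frob_nonneg hu.1 hZ) (frob_nonneg hu.2 hY), fun k => ?_⟩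
    have hmax : lam / (1 - alp) * max 0 (Q k + θ) ≤ lam / (1 - alp) * pv k :=
      mul_le_mul_of_nonneg_left (max_le (hpv k) (le_sub_iff_add_le.1 (hQ k))) hc
    rw [ContinuousLinearMap.coprod_apply, frobDual_apply, frobDual_apply, frob_scenarioMoment]
    linarith [hobj k]
  · rintro ⟨θ, ℓ, hℓ, hdual⟩
    obtain ⟨Z, Y, hZ, hY, hℓZY⟩ :=
      exists_posSemidef_forall_isHermitian_eq_frob_add_frob (ℓ := ℓ.toLinearMap) hℓ
    obtain ⟨z₁, z₂, z₃, rfl⟩ := exists_eq_blockMat hZ.isHermitian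
    refine ⟨θ, v + lam * θ - frob S z₁ + 2 * (∑ j, μ j * z₂ j) - γ * z₃ - η * frob S Y, z₃, z₁, Y,
      z₂, fun k => max 0 (Q k + θ), fun k => le_max_left _ _, hZ, hY, fun k => ?_,
      fun k => le_sub_iff_add_le.2 (le_max_right _ _), by ring⟩
    have hdual_k := hdual k
    obtain ⟨hA₁, hA₂⟩ := isHermitian_scenarioMoment ξ μ S γ η hS k
    rw [← ContinuousLinearMap.coe_coe, hℓZY _ hA₁ hA₂, frob_scenarioMoment] at hdual_k
    linarith

end MomentSet

theorem stmt10_general {D : Type*} {K J : ℕ} (X : Set D) (g : D → ℝ) (Q : D → Fin K → ℝ)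
    (lam alp : ℝ) (hlam0 : 0 ≤ lam) (halp0 : 0 ≤ alp) (halp1 : alp < 1)
    (γ η : ℝ) (ξ : Fin K → Fin J → ℝ) (μ : D → Fin J → ℝ) (S : D → Matrix (Fin J) (Fin J) ℝ)
    (hSpd : ∀ z ∈ X, (S z).PosDef)
    (hfeas : ∀ z ∈ X, (Type3Set K J ξ (μ z) (S z) γ η).Nonempty) :
    sInf {v : ℝ | ∃ z ∈ X,
        v = g z + sSup {r : ℝ | ∃ p ∈ Type3Set K J ξ (μ z) (S z) γ η,
          ∃ q ∈ CVaRSet K lam alp p,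
          r = (1 - lam) * (∑ k, p k * Q z k) + ∑ k, q k * Q z k}} =
    sInf {v : ℝ | ∃ z ∈ X, ∃ θ s z₃ : ℝ, ∃ z₁ Y : Matrix (Fin J) (Fin J) ℝ,
        ∃ z₂ : Fin J → ℝ, ∃ pv : Fin K → ℝ,
        (∀ k, 0 ≤ pv k) ∧
        (blockMat z₁ z₂ z₃).PosSemidef ∧ Y.PosSemidef ∧
        (∀ k, (1 - lam) * Q z k ≤ s - 2 * (∑ j, z₂ j * ξ k j) +
          frob (Matrix.vecMulVec (fun j => ξ k j - μ z j) (fun j => ξ k j - μ z j)) Y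
          - (lam / (1 - alp)) * pv k) ∧
        (∀ k, Q z k ≤ pv k - θ) ∧
        v = g z - lam * θ + s + frob (S z) z₁ - 2 * (∑ j, μ z j * z₂ j) + γ * z₃
            + η * frob (S z) Y} := by
  have hc : 0 ≤ lam / (1 - alp) := div_nonneg hlam0 (sub_nonneg.2 halp1.le)
  have hdual (z : D) (hz : z ∈ X) : IsGLB (sdpValues ξ (μ z) (S z) γ η lam alp (Q z))
      (sSup (meanCVaRValues (Type3Set K J ξ (μ z) (S z) γ η) lam alp (Q z))) := by
    have hfeas_z := hfeas z hz
    rw [type3Set_eq_conicAmbiguitySet _ _ _ _ _ (hSpd z hz)] at hfeas_z ⊢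
    rw [sdpValues_eq_conicDualValues _ _ _ _ _ (hSpd z hz).isHermitian hc]
    exact isGLB_conicDualValues hlam0 halp0 halp1 hfeas_z
  refine (sInf_add_eq_of_isGLB g hdual).trans (congrArg sInf (Set.ext fun v => ?_))
  refine exists_congr fun z => and_congr_right fun _ => ?_
  constructor
  · rintro ⟨_, ⟨θ, s, z₃, z₁, Y, z₂, pv, hpv, hZ, hY, hobj, hQ, rfl⟩, rfl⟩
    exact ⟨θ, s, z₃, z₁, Y, z₂, pv, hpv, hZ, hY, hobj, hQ, by ring⟩
  · rintro ⟨θ, s, z₃, z₁, Y, z₂, pv, hpv, hZ, hY, hobj, hQ, rfl⟩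
    exact ⟨_, ⟨θ, s, z₃, z₁, Y, z₂, pv, hpv, hZ, hY, hobj, hQ, rfl⟩, by ring⟩

theorem stmt10 (I d K J : ℕ) (hI : 0 < I) (hd : 0 < d) (hK : 0 < K) (hJ : 0 < J)
    (X : Set ((Fin I → ℝ) × (Fin d → ℝ))) (hXne : X.Nonempty)
    (hXbin : ∀ z ∈ X, ∀ i, z.1 i = 0 ∨ z.1 i = 1)
    (g : (Fin I → ℝ) × (Fin d → ℝ) → ℝ)
    (Q : (Fin I → ℝ) → Fin K → ℝ)
    (lam alp : ℝ) (hlam0 : 0 ≤ lam) (hlam1 : lam ≤ 1) (halp0 : 0 < alp) (halp1 : alp < 1)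
    (γ η : ℝ) (ξ : Fin K → Fin J → ℝ)
    (μ : (Fin I → ℝ) → Fin J → ℝ)
    (S : (Fin I → ℝ) → Matrix (Fin J) (Fin J) ℝ)
    (hSpd : ∀ x : Fin I → ℝ, (S x).PosDef)
    (hslater : ∀ x : Fin I → ℝ, (∃ y, (x, y) ∈ X) →
      ∃ p : Fin K → ℝ, (∀ k, 0 ≤ p k) ∧ (∑ k, p k) = 1 ∧
        (fun j => (∑ k, p k * ξ k j) - μ x j) ⬝ᵥ
          ((S x)⁻¹ *ᵥ fun j => (∑ k, p k * ξ k j) - μ x j) < γ ∧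
        (η • S x -
          ∑ k, p k • Matrix.vecMulVec (fun j => ξ k j - μ x j)
            (fun j => ξ k j - μ x j)).PosDef) :
    sInf {v : ℝ | ∃ z ∈ X,
        v = g z + sSup {r : ℝ | ∃ p ∈ Type3Set K J ξ (μ z.1) (S z.1) γ η,
          ∃ q ∈ CVaRSet K lam alp p,
          r = (1 - lam) * (∑ k, p k * Q z.1 k) + ∑ k, q k * Q z.1 k}} =
    sInf {v : ℝ | ∃ z ∈ X, ∃ θ s z₃ : ℝ, ∃ z₁ Y : Matrix (Fin J) (Fin J) ℝ,
        ∃ z₂ : Fin J → ℝ, ∃ pv : Fin K → ℝ,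
        (∀ k, 0 ≤ pv k) ∧
        (blockMat z₁ z₂ z₃).PosSemidef ∧ Y.PosSemidef ∧
        (∀ k, (1 - lam) * Q z.1 k ≤ s - 2 * (∑ j, z₂ j * ξ k j) +
          frob (Matrix.vecMulVec (fun j => ξ k j - μ z.1 j) (fun j => ξ k j - μ z.1 j)) Y
          - (lam / (1 - alp)) * pv k) ∧
        (∀ k, Q z.1 k ≤ pv k - θ) ∧
        v = g z - lam * θ + s + frob (S z.1) z₁ - 2 * (∑ j, μ z.1 j * z₂ j) + γ * z₃
            + η * frob (S z.1) Y} := by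
  refine stmt10_general X g (fun z => Q z.1) lam alp hlam0 halp0.le halp1 γ η ξ (fun z => μ z.1)
    (fun z => S z.1) (fun z _ => hSpd z.1) fun z hz => ?_
  obtain ⟨p, hp, hp_sum, hell, hcov⟩ := hslater z.1 ⟨z.2, hz⟩
  exact ⟨p, hp, hp_sum, hell.le, hcov.posSemidef⟩
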